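/- Let H ⊂ k[x_1,...,x_n] be a finite set of nonzero homogeneous polynomials whose leading terms (w.r.t. degrevlex with x_n smallest) are pairwise Pommaret-indivisible, and suppose I = ⊕_{h ∈ H} k[X_P(h)]·h as a direct sum of k-vector spaces, where X_P(h) = {x_{cls(h)}, ..., x_n}. Then the Hilbert series of I satisfies HS_I(t) = (1 - Σ_{h∈H} (1-t)^{n_h} t^{c_h}) / (1-t)^n, where c_h = deg(h) and n_h = cls(h) - 1 is the number of non-multiplicative variables of h. -/

import Mathlib

open MvPolynomial PowerSeries

attribute [local instance] MvPolynomial.gradedAlgebra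

/-- Strict degree reverse lexicographic order with `x_n` (highest index) smallest. -/
def DegRevLexLT {n : ℕ} (α β : Fin n →₀ ℕ) : Prop :=
  (α.sum fun _ v => v) < (β.sum fun _ v => v) ∨
    ((α.sum fun _ v => v) = (β.sum fun _ v => v) ∧
      ∃ i : Fin n, β i < α i ∧ ∀ j : Fin n, i < j → α j = β j)

/-- `e` is the exponent of the leading term of `f` w.r.t. degrevlex. -/
def IsLeadExp {n : ℕ} {k : Type*} [CommRing k] (f : MvPolynomial (Fin n) k)
    (e : Fin n →₀ ℕ) : Prop :=
  e ∈ f.support ∧ ∀ e' ∈ f.support, e' ≠ e → DegRevLexLT e' e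

/-- The Hilbert function of an ideal (image of the degree-`s` homogeneous component in the
quotient). -/
noncomputable def hilbFn {n : ℕ} {k : Type*} [Field k]
    (I : Ideal (MvPolynomial (Fin n) k)) (s : ℕ) : ℕ :=
  Module.finrank k
    ((MvPolynomial.homogeneousSubmodule (Fin n) k s).map
      (Ideal.Quotient.mkₐ k I).toLinearMap)

/-- The Hilbert series of `I` with coefficients in `ℚ`. -/
noncomputable def hilbSeries {n : ℕ} {k : Type*} [Field k]
    (I : Ideal (MvPolynomial (Fin n) k)) : PowerSeries ℚ :=
  PowerSeries.mk fun s => (hilbFn I s : ℚ)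

/-!
Each `k[M_i] h_i`, with `M_i` the multiplicative variables of `h_i`, is a copy of the polynomial
ring in the variables `M_i` shifted by `deg h_i`, so its Hilbert series is
`t ^ deg h_i / (1 - t) ^ |M_i|`. As the `h_i` are homogeneous, taking homogeneous components turns
the decomposition of `I` into one of each graded piece `I_d`, so these series add up to that of `I`
as a graded vector space. Subtracting from the Hilbert series `1 / (1 - t) ^ n` of the polynomial
ring gives that of the quotient.
-/

section GeometricSeries

variable {R : Type*}

lemma mk_one_pow_mul_one_sub_X_pow_add [CommRing R] (a b : ℕ) :
    (PowerSeries.mk 1 : R⟦X⟧) ^ a * (1 - PowerSeries.X) ^ (a + b) = (1 - PowerSeries.X) ^ b := by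
  rw [pow_add, ← mul_assoc, ← mul_pow, PowerSeries.mk_one_mul_one_sub_eq_one, one_pow, one_mul]

lemma natCast_card_finsuppAntidiag [CommSemiring R] {σ : Type*} [DecidableEq σ] (M : Finset σ)
    (d : ℕ) :
    ((M.finsuppAntidiag d).card : R) =
      PowerSeries.coeff d ((PowerSeries.mk 1 : R⟦X⟧) ^ M.card) := by
  rw [← Finset.prod_const, PowerSeries.coeff_prod]
  simp

end GeometricSeries

section Forms

variable {σ R : Type*} [CommSemiring R]

lemma mem_supported_iff_forall_support_subset {s : Set σ} {p : MvPolynomial σ R} :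
    p ∈ supported R s ↔ ∀ a ∈ p.support, (a.support : Set σ) ⊆ s := by
  simp only [mem_supported, Set.subset_def, Finset.mem_coe, mem_vars_iff_mem_support]
  exact ⟨fun hp a ha l hl ↦ hp l ⟨a, ha, hl⟩, fun hp l ⟨a, ha, hl⟩ ↦ hp a ha l hl⟩

lemma mem_supported_Ici_iff [LinearOrder σ] {c : σ} {p : MvPolynomial σ R} :
    p ∈ supported R (Set.Ici c) ↔ ∀ a ∈ p.support, ∀ l < c, a l = 0 := by
  simp only [mem_supported_iff_forall_support_subset, Set.subset_def, Set.mem_Ici, Finset.mem_coe,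
    Finsupp.mem_support_iff, ← not_lt, not_imp_not]

lemma homogeneousComponent_mem_supported {s : Set σ} {p : MvPolynomial σ R}
    (hp : p ∈ supported R s) (d : ℕ) : homogeneousComponent d p ∈ supported R s := by
  rw [mem_supported_iff_forall_support_subset] at hp ⊢
  intro a ha
  rw [support_homogeneousComponent] at ha
  exact hp a (Finset.mem_filter.1 ha).1

variable (R) in
/-- The forms of degree `d` in the variables `M`, i.e. the degree `d` part of the subring `R[M]`. -/
noncomputable def formsIn (M : Finset σ) (d : ℕ) : Submodule R (MvPolynomial σ R) :=
  homogeneousSubmodule σ R d ⊓ Subalgebra.toSubmodule (supported R (M : Set σ))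

lemma formsIn_univ [Fintype σ] (d : ℕ) :
    formsIn R (Finset.univ : Finset σ) d = homogeneousSubmodule σ R d := by
  simp [formsIn]

lemma homogeneousComponent_mem_formsIn {M : Finset σ} {p : MvPolynomial σ R}
    (hp : p ∈ supported R (M : Set σ)) (d : ℕ) : homogeneousComponent d p ∈ formsIn R M d :=
  ⟨homogeneousComponent_mem d p, homogeneousComponent_mem_supported hp d⟩

lemma formsIn_eq_restrictSupport [DecidableEq σ] (M : Finset σ) (d : ℕ) :
    formsIn R M d = restrictSupport R (M.finsuppAntidiag d : Set (σ →₀ ℕ)) := by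
  ext p
  have hhom : p ∈ homogeneousSubmodule σ R d ↔ ∀ a ∈ p.support, a.degree = d := by
    rw [homogeneousSubmodule_eq_finsupp_supported]
    rfl
  have hexp (a : σ →₀ ℕ) : a ∈ M.finsuppAntidiag d ↔ a.degree = d ∧ (a.support : Set σ) ⊆ M := by
    rw [Finset.mem_finsuppAntidiag', Finset.coe_subset]
    rfl
  rw [formsIn, Submodule.mem_inf, hhom, Subalgebra.mem_toSubmodule,
    mem_supported_iff_forall_support_subset, mem_restrictSupport_iff]
  simp only [Set.subset_def, SetLike.mem_coe, hexp]
  exact forall₂_and.symm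

/-- The monomial basis of `formsIn R M d`. -/
noncomputable def formsInBasis [DecidableEq σ] (M : Finset σ) (d : ℕ) :
    Module.Basis (M.finsuppAntidiag d) R (formsIn R M d) :=
  (basisRestrictSupport R _).map (LinearEquiv.ofEq _ _ (formsIn_eq_restrictSupport M d).symm)

instance formsIn_free (M : Finset σ) (d : ℕ) : Module.Free R (formsIn R M d) := by
  classical exact .of_basis (formsInBasis M d)

instance formsIn_finite (M : Finset σ) (d : ℕ) : Module.Finite R (formsIn R M d) := by
  classical exact .of_basis (formsInBasis M d)

variable (R) in
/-- The coefficients `g ∈ R[M]` for which `g * h` is a form of degree `d`, when `h` is a nonzero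
form of degree `m` over a domain: the forms of degree `d - m`, and only `0` if `d < m`. -/
noncomputable def multipliers (M : Finset σ) (m d : ℕ) : Submodule R (MvPolynomial σ R) :=
  if m ≤ d then formsIn R M (d - m) else ⊥

lemma multipliers_of_le (M : Finset σ) {m d : ℕ} (hmd : m ≤ d) :
    multipliers R M m d = formsIn R M (d - m) :=
  if_pos hmd

lemma multipliers_of_not_le (M : Finset σ) {m d : ℕ} (hmd : ¬m ≤ d) : multipliers R M m d = ⊥ :=
  if_neg hmd

instance multipliers_free (M : Finset σ) (m d : ℕ) : Module.Free R (multipliers R M m d) := by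
  by_cases hmd : m ≤ d
  · rw [multipliers_of_le M hmd]
    infer_instance
  · rw [multipliers_of_not_le M hmd]
    infer_instance

instance multipliers_finite (M : Finset σ) (m d : ℕ) : Module.Finite R (multipliers R M m d) := by
  by_cases hmd : m ≤ d
  · rw [multipliers_of_le M hmd]
    infer_instance
  · rw [multipliers_of_not_le M hmd]
    infer_instance

lemma multipliers_le_supported (M : Finset σ) (m d : ℕ) :
    multipliers R M m d ≤ Subalgebra.toSubmodule (supported R (M : Set σ)) := by
  by_cases hmd : m ≤ d
  · exact (multipliers_of_le M hmd).trans_le inf_le_right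
  · exact (multipliers_of_not_le M hmd).trans_le bot_le

lemma isHomogeneous_mul_of_mem_multipliers {M : Finset σ} {m d : ℕ} {g h : MvPolynomial σ R}
    (hg : g ∈ multipliers R M m d) (hh : h.IsHomogeneous m) : (g * h).IsHomogeneous d := by
  by_cases hmd : m ≤ d
  · rw [multipliers_of_le M hmd] at hg
    simpa only [Nat.sub_add_cancel hmd] using hg.1.mul hh
  · rw [multipliers_of_not_le M hmd, Submodule.mem_bot] at hg
    rw [hg, zero_mul]
    exact isHomogeneous_zero σ R d

lemma exists_mem_multipliers_homogeneousComponent_mul {M : Finset σ} {m : ℕ}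
    {g h : MvPolynomial σ R} (hg : g ∈ supported R (M : Set σ)) (hh : h.IsHomogeneous m) (d : ℕ) :
    ∃ g' ∈ multipliers R M m d, homogeneousComponent d (g * h) = g' * h := by
  have hcomp (j : ℕ) (p : MvPolynomial σ R) :
      homogeneousComponent j p = DirectSum.decompose (homogeneousSubmodule σ R) p j :=
    (decomposition.decompose'_apply p j).symm
  by_cases hmd : m ≤ d
  · rw [multipliers_of_le M hmd]
    refine ⟨_, homogeneousComponent_mem_formsIn hg (d - m), ?_⟩
    rw [hcomp, hcomp, DirectSum.coe_decompose_mul_of_right_mem_of_le _ hh hmd]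
  · refine ⟨0, zero_mem _, ?_⟩
    rw [hcomp, DirectSum.coe_decompose_mul_of_right_mem_of_not_le _ hh hmd, zero_mul]

variable [StrongRankCondition R]

lemma natCast_finrank_formsIn (S : Type*) [CommSemiring S] (M : Finset σ) (d : ℕ) :
    (Module.finrank R (formsIn R M d) : S) =
      PowerSeries.coeff d ((PowerSeries.mk 1 : S⟦X⟧) ^ M.card) := by
  classical
  rw [Module.finrank_eq_card_basis (formsInBasis M d), Fintype.card_coe,
    natCast_card_finsuppAntidiag]

lemma natCast_finrank_multipliers (S : Type*) [CommSemiring S] (M : Finset σ) (m d : ℕ) :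
    (Module.finrank R (multipliers R M m d) : S) =
      PowerSeries.coeff d (PowerSeries.X ^ m * (PowerSeries.mk 1 : S⟦X⟧) ^ M.card) := by
  have : Nontrivial R := nontrivial_of_invariantBasisNumber R
  rw [PowerSeries.coeff_X_pow_mul']
  split_ifs with hmd
  · rw [multipliers_of_le M hmd, natCast_finrank_formsIn]
  · rw [multipliers_of_not_le M hmd, finrank_bot, Nat.cast_zero]

end Forms

section StanleyDecomposition

variable {σ ι R : Type*} [Fintype ι] [CommSemiring R]

/-- The degree `d` part of an ideal, as a module over the coefficients. -/
noncomputable def homogeneousPart (I : Ideal (MvPolynomial σ R)) (d : ℕ) :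
    Submodule R (MvPolynomial σ R) :=
  homogeneousSubmodule σ R d ⊓ I.restrictScalars R

/-- A Stanley decomposition `I = ⨁ i, R[M i] · h i` of an ideal, where `h i` is a form of degree
`m i` and `M i` is its set of multiplicative variables. The direct sum is encoded by the unique
representation of each `f ∈ I` by coefficients in the subrings `R[M i]`. -/
structure IsStanleyDecomposition (I : Ideal (MvPolynomial σ R)) (h : ι → MvPolynomial σ R)
    (M : ι → Finset σ) (m : ι → ℕ) : Prop where
  isHomogeneous (i : ι) : (h i).IsHomogeneous (m i)
  mem (i : ι) : h i ∈ I
  existsUnique : ∀ f ∈ I,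
    ∃! g : ι → MvPolynomial σ R, (∀ i, g i ∈ supported R (M i : Set σ)) ∧ f = ∑ i, g i * h i

namespace IsStanleyDecomposition

/-- The map `g ↦ ∑ i, g i * h i` on the tuples of coefficients contributing to degree `d`. -/
noncomputable def combination (h : ι → MvPolynomial σ R) (M : ι → Finset σ) (m : ι → ℕ) (d : ℕ) :
    (∀ i, multipliers R (M i) (m i) d) →ₗ[R] MvPolynomial σ R :=
  ∑ i, LinearMap.mulRight R (h i) ∘ₗ Submodule.subtype _ ∘ₗ LinearMap.proj i

lemma combination_apply (h : ι → MvPolynomial σ R) (M : ι → Finset σ) (m : ι → ℕ) (d : ℕ)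
    (g : ∀ i, multipliers R (M i) (m i) d) :
    combination h M m d g = ∑ i, (g i : MvPolynomial σ R) * h i := by
  simp [combination]

variable {I : Ideal (MvPolynomial σ R)} {h : ι → MvPolynomial σ R} {M : ι → Finset σ} {m : ι → ℕ}

lemma sum_mul_mem (hI : IsStanleyDecomposition I h M m) (g : ι → MvPolynomial σ R) :
    ∑ i, g i * h i ∈ I :=
  sum_mem fun i _ ↦ I.mul_mem_left _ (hI.mem i)

lemma combination_injective (hI : IsStanleyDecomposition I h M m) (d : ℕ) :
    Function.Injective (combination h M m d) := by
  intro g g' hgg'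
  have hsupp (g : ∀ i, multipliers R (M i) (m i) d) (i : ι) :
      (g i : MvPolynomial σ R) ∈ supported R (M i : Set σ) :=
    multipliers_le_supported _ _ _ (g i).2
  simp only [combination_apply] at hgg'
  have hcoe := (hI.existsUnique _ (hI.sum_mul_mem _)).unique ⟨hsupp g, rfl⟩ ⟨hsupp g', hgg'⟩
  exact funext fun i ↦ Subtype.ext (congrFun hcoe i)

lemma range_combination (hI : IsStanleyDecomposition I h M m) (d : ℕ) :
    LinearMap.range (combination h M m d) = homogeneousPart I d := by
  apply le_antisymm
  · rintro _ ⟨g, rfl⟩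
    rw [combination_apply]
    exact ⟨sum_mem fun i _ ↦ isHomogeneous_mul_of_mem_multipliers (g i).2 (hI.isHomogeneous i),
      hI.sum_mul_mem _⟩
  · rintro f ⟨hfd, hfI⟩
    obtain ⟨g, ⟨hgM, rfl⟩, -⟩ := hI.existsUnique f hfI
    choose g' hg' hcomp using fun i ↦
      exists_mem_multipliers_homogeneousComponent_mul (hgM i) (hI.isHomogeneous i) d
    refine ⟨fun i ↦ ⟨g' i, hg' i⟩, ?_⟩
    calc combination h M m d (fun i ↦ ⟨g' i, hg' i⟩)
        = ∑ i, g' i * h i := combination_apply ..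
      _ = homogeneousComponent d (∑ i, g i * h i) := by simp only [map_sum, hcomp]
      _ = ∑ i, g i * h i := homogeneousComponent_eq_self hfd

variable [StrongRankCondition R]

lemma finrank_homogeneousPart (hI : IsStanleyDecomposition I h M m) (d : ℕ) :
    Module.finrank R (homogeneousPart I d) =
      ∑ i, Module.finrank R (multipliers R (M i) (m i) d) := by
  rw [← hI.range_combination d, LinearMap.finrank_range_of_inj (hI.combination_injective d),
    Module.finrank_pi_fintype]

lemma mk_natCast_finrank_homogeneousPart (S : Type*) [CommSemiring S]
    (hI : IsStanleyDecomposition I h M m) :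
    PowerSeries.mk (fun d ↦ (Module.finrank R (homogeneousPart I d) : S)) =
      ∑ i, PowerSeries.X ^ m i * (PowerSeries.mk 1 : S⟦X⟧) ^ (M i).card := by
  ext d
  simp only [PowerSeries.coeff_mk, map_sum, hI.finrank_homogeneousPart, Nat.cast_sum,
    natCast_finrank_multipliers]

end IsStanleyDecomposition

end StanleyDecomposition

section HilbertSeries

variable {n : ℕ} {k : Type*} [Field k]

lemma hilbFn_add_finrank_homogeneousPart (I : Ideal (MvPolynomial (Fin n) k)) (d : ℕ) :
    hilbFn I d + Module.finrank k (homogeneousPart I d) =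
      Module.finrank k (homogeneousSubmodule (Fin n) k d) := by
  have : Module.Finite k (homogeneousSubmodule (Fin n) k d) :=
    Module.Finite.iff_fg.2 (homogeneousSubmodule_fg (Fin n) k d)
  have hker : LinearMap.ker (Ideal.Quotient.mkₐ k I).toLinearMap = I.restrictScalars k := by
    ext f
    simp [Ideal.Quotient.eq_zero_iff_mem]
  rw [hilbFn, homogeneousPart, ← hker, ← Submodule.map_comap_subtype,
    Submodule.finrank_map_subtype_eq, ← LinearMap.ker_domRestrict, ← LinearMap.range_domRestrict]
  exact LinearMap.finrank_range_add_finrank_ker _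

lemma hilbSeries_add_mk_finrank_homogeneousPart (I : Ideal (MvPolynomial (Fin n) k)) :
    hilbSeries I + PowerSeries.mk (fun d ↦ (Module.finrank k (homogeneousPart I d) : ℚ)) =
      PowerSeries.mk 1 ^ n := by
  ext d
  rw [map_add, hilbSeries, PowerSeries.coeff_mk, PowerSeries.coeff_mk]
  calc (hilbFn I d + Module.finrank k (homogeneousPart I d) : ℚ)
      = Module.finrank k (formsIn k (Finset.univ : Finset (Fin n)) d) := by
        rw [formsIn_univ]
        exact_mod_cast hilbFn_add_finrank_homogeneousPart I d
    _ = PowerSeries.coeff d (PowerSeries.mk 1 ^ n) := by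
        rw [natCast_finrank_formsIn, Finset.card_univ, Fintype.card_fin]

theorem hilbert_series_of_pommaret_decomposition_general {ι : Type*} [Fintype ι]
    {I : Ideal (MvPolynomial (Fin n) k)} {h : ι → MvPolynomial (Fin n) k}
    {M : ι → Finset (Fin n)} {m : ι → ℕ} (hI : IsStanleyDecomposition I h M m) :
    hilbSeries I * (1 - PowerSeries.X) ^ n =
      1 - ∑ i, (1 - PowerSeries.X) ^ (M i)ᶜ.card * PowerSeries.X ^ m i := by
  have hsum := hilbSeries_add_mk_finrank_homogeneousPart I
  rw [hI.mk_natCast_finrank_homogeneousPart ℚ] at hsum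
  have hpoly : (PowerSeries.mk 1 : ℚ⟦X⟧) ^ n * (1 - PowerSeries.X) ^ n = 1 :=
    mk_one_pow_mul_one_sub_X_pow_add n 0
  have hpiece (i : ι) : (PowerSeries.mk 1 : ℚ⟦X⟧) ^ (M i).card * (1 - PowerSeries.X) ^ n =
      (1 - PowerSeries.X) ^ (M i)ᶜ.card := by
    rw [← mk_one_pow_mul_one_sub_X_pow_add (M i).card (M i)ᶜ.card, Finset.card_add_card_compl,
      Fintype.card_fin]
  rw [eq_sub_of_add_eq hsum, sub_mul, hpoly, Finset.sum_mul]
  congr 1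
  exact Finset.sum_congr rfl fun i _ ↦ by rw [mul_assoc, hpiece, mul_comm]

end HilbertSeries

/-- Let `H = {h_1,…,h_s} ⊆ k[x_1,…,x_n]` consist of nonzero homogeneous polynomials whose
degrevlex leading exponents `e i` (with class index `c i`, the largest index with nonzero
exponent) are pairwise Pommaret-indivisible, and suppose
`I = ⊕_i k[x_{cls(h_i)},…,x_n]·h_i` (every `f ∈ I` has a unique representation
`Σ g_i h_i` with `g_i` involving only the multiplicative variables `x_{cls(h_i)},…,x_n`).
Then `HS_I(t)·(1-t)^n = 1 - Σ_i (1-t)^{n_i} t^{c_i}` where `c_i = deg h_i` and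
`n_i = cls(h_i) - 1` is the number of non-multiplicative variables of `h_i`. -/
theorem hilbert_series_of_pommaret_decomposition {k : Type*} [Field k] (n s : ℕ)
    (h : Fin s → MvPolynomial (Fin n) k) (e : Fin s → (Fin n →₀ ℕ))
    (c : Fin s → Fin n) (dg : Fin s → ℕ) (I : Ideal (MvPolynomial (Fin n) k))
    (hne : ∀ i, h i ≠ 0)
    (hhom : ∀ i, h i ∈ MvPolynomial.homogeneousSubmodule (Fin n) k (dg i))
    (hlead : ∀ i, IsLeadExp (h i) (e i))
    (hcls : ∀ i, e i (c i) ≠ 0 ∧ ∀ j : Fin n, c i < j → e i j = 0)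
    (hindiv : ∀ i j, i ≠ j →
      ¬ (e i ≤ e j ∧ ∀ l : Fin n, l < c i → e j l = e i l))
    (hmem : ∀ i, h i ∈ I)
    (hdecomp : ∀ f ∈ I, ∃! g : Fin s → MvPolynomial (Fin n) k,
      (∀ i, ∀ a ∈ (g i).support, ∀ l : Fin n, l < c i → a l = 0) ∧
      f = ∑ i, g i * h i) :
    hilbSeries I * (1 - PowerSeries.X) ^ n =
      1 - ∑ i, (1 - PowerSeries.X) ^ ((c i : ℕ)) * PowerSeries.X ^ (dg i) := by
  have hI : IsStanleyDecomposition I h (fun i ↦ Finset.Ici (c i)) dg :=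
    ⟨hhom, hmem, by simpa only [Finset.coe_Ici, mem_supported_Ici_iff] using hdecomp⟩
  simpa [Finset.card_compl, Nat.sub_sub_self] using
    hilbert_series_of_pommaret_decomposition_general hI
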